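/- In the lattice-of-functionals setting, let m be a nonzero integer with m | 2HH′², and let b ∈ X satisfy m | H′·b(k) (i.e. b(k)/ε′ is a multiple of m) for every k ∈ K. Then ∑_{a∈X} ε₀·exp(−2πi·ε·∑_{k∈K} a(k)·b(k))·exp(−iπm·ε·∑_{k∈K} a(k)²) = C_{im}·exp(iπ·(ε/m)·∑_{k∈K} b(k)²), where C_{im} = (√(m/2)·(1 + i^{2HH′²/m})/(1 + i))^{H²} if m > 0, and C_{im} = (√(−m/2)·(1 + (−i)^{2HH′²/(−m)})/(1 − i))^{H²} if m < 0. -/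

import Mathlib

/-- The canonical integer representative `z` of `u ∈ ℤ/(HH′²)ℤ` with
`−HH′²/2 ≤ z < HH′²/2`, so that the point of `L′` corresponding to `u` is `ε′z = z/H′`. -/
def lift' (H H' : ℕ) (u : ZMod (H * H' ^ 2)) : ℤ :=
  if (u.val : ℤ) < ((H : ℤ) * (H' : ℤ) ^ 2) / 2 then (u.val : ℤ)
  else (u.val : ℤ) - (H : ℤ) * (H' : ℤ) ^ 2

/-- The rational point `ε′z ∈ L′ ⊆ ℚ ⊆ ℂ` corresponding to `u ∈ ℤ/(HH′²)ℤ`. -/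
noncomputable def val' (H H' : ℕ) (u : ZMod (H * H' ^ 2)) : ℂ :=
  (lift' H H' u : ℂ) / (H' : ℂ)

/-- `ε₀ = (HH′²)^{−H²/2} = |X|^{−1/2}`. -/
noncomputable def eps0 (H H' : ℕ) (K : Type) [Fintype K] [DecidableEq K]
    [NeZero H] [NeZero H'] : ℂ :=
  (Real.sqrt (Fintype.card (K → ZMod (H * H' ^ 2))) : ℂ)⁻¹

open Complex Filter Topology

/-- If `Re (1/a) → ∞` then `√a ∑ₙ exp (-π a (n + ρ)²) → 1`. -/
theorem tendsto_sqrt_mul_tsum_exp_shift {ι : Type*} {l : Filter ι} {a : ι → ℂ}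
    (ha : Tendsto (fun x => (a x)⁻¹.re) l atTop) (ρ : ℝ) :
    Tendsto (fun x => a x ^ (1 / 2 : ℂ) * ∑' n : ℤ, cexp (-Real.pi * a x * (n + ρ) ^ 2)) l
      (𝓝 1) := by
  have key : ∀ᶠ x in l, a x ^ (1 / 2 : ℂ) * ∑' n : ℤ, cexp (-Real.pi * a x * (n + ρ) ^ 2)
      = ∑' n : ℤ, cexp (-Real.pi * (a x)⁻¹ * n ^ 2 + 2 * Real.pi * I * ρ * n) := by
    filter_upwards [ha.eventually_gt_atTop 0] with x hx
    have hne : a x ≠ 0 := by rintro h; simp [h] at hx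
    have hre : 0 < (a x).re := by
      rw [inv_re] at hx
      exact (div_pos_iff_of_pos_right (normSq_pos.mpr hne)).mp hx
    have hpow : a x ^ (1 / 2 : ℂ) ≠ 0 := by simp [cpow_eq_zero_iff, hne]
    have h := tsum_exp_neg_quadratic hre (-a x * ρ)
    calc a x ^ (1 / 2 : ℂ) * ∑' n : ℤ, cexp (-Real.pi * a x * (n + ρ) ^ 2)
        = a x ^ (1 / 2 : ℂ) * (cexp (-Real.pi * a x * ρ ^ 2) *
            ∑' n : ℤ, cexp (-Real.pi * a x * n ^ 2 + 2 * Real.pi * (-a x * ρ) * n)) := by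
          congr 1
          rw [← tsum_mul_left]
          refine tsum_congr fun n => ?_
          rw [← Complex.exp_add]
          ring_nf
      _ = cexp (-Real.pi * a x * ρ ^ 2) *
            ∑' n : ℤ, cexp (-Real.pi / a x * (n + I * (-a x * ρ)) ^ 2) := by
          rw [h]
          field_simp
      _ = _ := by
          rw [← tsum_mul_left]
          refine tsum_congr fun n => ?_
          rw [← Complex.exp_add]
          congr 1
          field_simp
          ring_nf
          simp only [I_sq]
          ring
  rw [tendsto_congr' key]
  have hnorm : ∀ x (n : ℤ), ‖cexp (-Real.pi * (a x)⁻¹ * n ^ 2 + 2 * Real.pi * I * ρ * n)‖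
      = Real.exp (-Real.pi * (a x)⁻¹.re * n ^ 2) := by
    intro x n
    rw [norm_exp]
    congr 1
    have h1 : (-Real.pi * (a x)⁻¹ * n ^ 2 + 2 * Real.pi * I * ρ * n : ℂ)
        = ((-Real.pi * n ^ 2 : ℝ) : ℂ) * (a x)⁻¹ + ((2 * Real.pi * ρ * n : ℝ) : ℂ) * I := by
      push_cast; ring
    rw [h1, add_re, re_ofReal_mul, re_ofReal_mul, I_re]
    ring
  have hlim : ∑' n : ℤ, (if n = 0 then (1 : ℂ) else 0) = 1 := by simp
  rw [← hlim]
  refine tendsto_tsum_of_dominated_convergence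
    (bound := fun n : ℤ => Real.exp (-Real.pi * n ^ 2)) ?_ ?_ ?_
  · simpa using summable_pow_mul_jacobiTheta₂_term_bound 0 one_pos 0
  · intro n
    by_cases hn : n = 0
    · simpa [hn] using tendsto_const_nhds
    · rw [if_neg hn, tendsto_zero_iff_norm_tendsto_zero]
      simp only [hnorm]
      refine Real.tendsto_exp_atBot.comp ?_
      have hc : -Real.pi * (n : ℝ) ^ 2 < 0 := by
        have : 0 < (n : ℝ) ^ 2 := by positivity
        nlinarith [Real.pi_pos]
      refine (ha.const_mul_atTop_of_neg hc).congr fun x => ?_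
      ring
  · filter_upwards [ha.eventually_ge_atTop 1] with x hx n
    rw [hnorm, Real.exp_le_exp]
    have : 0 ≤ Real.pi * (n : ℝ) ^ 2 := by positivity
    nlinarith

theorem tsum_int_eq_sum_residue (M : ℕ) [NeZero M] {g : ℤ → ℂ}
    (hg : ∀ r : Fin M, Summable fun n : ℤ => g (r + n * M)) :
    ∑' n, g n = ∑ r : Fin M, ∑' n : ℤ, g (r + n * M) := by
  have hsum : Summable fun p : Fin M × ℤ => g (p.1 + p.2 * M) := by
    rw [← summable_norm_iff]
    exact (summable_prod_of_nonneg fun _ => norm_nonneg _).mpr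
      ⟨fun r => (hg r).norm, (hasSum_fintype _).summable⟩
  have hsymm : ∀ p : Fin M × ℤ,
      ((Equiv.prodComm _ _).trans (Int.divModEquiv M).symm) p = p.1 + p.2 * M := fun p => by
    simp [Int.divModEquiv, add_comm]
  rw [← ((Equiv.prodComm _ _).trans (Int.divModEquiv M).symm).tsum_eq]
  simp only [hsymm]
  rw [hsum.tsum_prod' hg, tsum_fintype]

/-- Gaussian-weighted sums of an `M`-periodic function are asymptotic to its sum over a period. -/
theorem tendsto_sqrt_mul_tsum_periodic {ι : Type*} {l : Filter ι} {a : ι → ℂ}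
    (ha : Tendsto (fun x => (a x)⁻¹.re) l atTop) (M : ℕ) [NeZero M] {f : ℤ → ℂ}
    (hf : Function.Periodic f (M : ℤ)) :
    Tendsto (fun x => a x ^ (1 / 2 : ℂ) *
        ∑' n : ℤ, f n * cexp (-Real.pi * a x * (n / M) ^ 2)) l
      (𝓝 (∑ r ∈ Finset.range M, f r)) := by
  have hM : (M : ℂ) ≠ 0 := NeZero.ne _
  have hper : ∀ (n : ℤ) (r : Fin M), f (r + n * M) = f r := fun n r => by
    simpa using hf.int_mul n r
  have key : ∀ᶠ x in l, ∑ r : Fin M, f r * (a x ^ (1 / 2 : ℂ) *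
        ∑' n : ℤ, cexp (-Real.pi * a x * (n + ((r / M : ℝ) : ℂ)) ^ 2))
      = a x ^ (1 / 2 : ℂ) * ∑' n : ℤ, f n * cexp (-Real.pi * a x * (n / M) ^ 2) := by
    filter_upwards [ha.eventually_gt_atTop 0] with x hx
    have hne : a x ≠ 0 := by rintro h; simp [h] at hx
    have hre : 0 < (a x).re := by
      rw [inv_re] at hx
      exact (div_pos_iff_of_pos_right (normSq_pos.mpr hne)).mp hx
    have hterm : ∀ (n : ℤ) (r : Fin M),
        f (r + n * M) * cexp (-Real.pi * a x * (((r + n * M : ℤ) : ℂ) / M) ^ 2)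
          = f r * cexp (-Real.pi * a x * (n + ((r / M : ℝ) : ℂ)) ^ 2) := by
      intro n r
      rw [hper]
      congr 2
      push_cast
      field_simp
      ring
    have hsum1 : ∀ r : Fin M,
        Summable fun n : ℤ => cexp (-Real.pi * a x * (n + ((r / M : ℝ) : ℂ)) ^ 2) := by
      intro r
      rw [← summable_norm_iff]
      have hb := summable_pow_mul_jacobiTheta₂_term_bound ((a x).re * (r / M)) hre 0
      refine hb.of_nonneg_of_le (fun _ => norm_nonneg _) fun n => ?_
      rw [norm_exp, pow_zero, one_mul, Real.exp_le_exp]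
      have h1 : (-Real.pi * a x * (n + ((r / M : ℝ) : ℂ)) ^ 2 : ℂ)
          = ((-Real.pi * (n + r / M) ^ 2 : ℝ) : ℂ) * a x := by
        push_cast; ring
      rw [h1, re_ofReal_mul]
      have h2 : 0 ≤ (r / M : ℝ) := by positivity
      have h3 : -(n : ℝ) ≤ |(n : ℝ)| := neg_le_abs _
      push_cast
      have h4 : 0 ≤ Real.pi * (a x).re := by positivity
      have h5 : (n : ℝ) ^ 2 - 2 * ((r / M : ℝ)) * |(n : ℝ)| ≤ (n + r / M) ^ 2 := by nlinarith
      nlinarith [mul_le_mul_of_nonneg_left h5 h4]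
    rw [tsum_int_eq_sum_residue M fun r => by simpa only [hterm] using (hsum1 r).mul_left (f r),
      Finset.mul_sum]
    refine Finset.sum_congr rfl fun r _ => ?_
    simp only [hterm]
    rw [tsum_mul_left]
    ring
  refine Tendsto.congr' key ?_
  rw [Finset.sum_range]
  refine tendsto_finsetSum _ fun r _ => ?_
  simpa using (tendsto_sqrt_mul_tsum_exp_shift ha (r / M : ℝ)).const_mul (f r)

theorem ofReal_mul_cpow {t : ℝ} (ht : 0 < t) {c : ℂ} (hc : c ≠ 0) (s : ℂ) :
    ((t : ℂ) * c) ^ s = (t : ℂ) ^ s * c ^ s := by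
  have ht' : (t : ℂ) ≠ 0 := by exact_mod_cast ht.ne'
  rw [cpow_def_of_ne_zero (mul_ne_zero ht' hc), cpow_def_of_ne_zero ht', cpow_def_of_ne_zero hc,
    log_ofReal_mul ht hc, ofReal_log ht.le, add_mul, Complex.exp_add]

theorem cpow_half_mul_I {t : ℝ} (ht : 0 < t) :
    ((t / 2 : ℝ) * I : ℂ) ^ (1 / 2 : ℂ) = Real.sqrt t / (1 - I) := by
  rw [ofReal_mul_cpow (by positivity) I_ne_zero, cpow_def_of_ne_zero I_ne_zero, log_I]
  have h1 : (((t / 2 : ℝ) : ℂ)) ^ (1 / 2 : ℂ) = (Real.sqrt (t / 2) : ℂ) := by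
    rw [Real.sqrt_eq_rpow, ofReal_cpow (by positivity)]
    norm_num
  have h2 : cexp (Real.pi / 2 * I * (1 / 2)) = (Real.sqrt 2 / 2 : ℝ) * (1 + I) := by
    rw [show (Real.pi / 2 * I * (1 / 2) : ℂ) = ((Real.pi / 4 : ℝ) : ℂ) * I by push_cast; ring,
      exp_mul_I, ← ofReal_cos, ← ofReal_sin, Real.cos_pi_div_four, Real.sin_pi_div_four]
    ring
  have h3 : (1 - I : ℂ) ≠ 0 := fun h => by simpa using congrArg re h
  have h4 : (Real.sqrt t : ℂ) = Real.sqrt (t / 2) * Real.sqrt 2 := by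
    rw [← ofReal_mul, ← Real.sqrt_mul (by positivity)]
    congr 2; ring
  rw [h1, h2, h4, eq_div_iff h3]
  push_cast
  linear_combination (-(Real.sqrt (t / 2) * Real.sqrt 2 / 2 : ℂ)) * I_sq

/-- The quadratic Gauss sum for an arbitrary positive modulus. -/
theorem sum_exp_sq_div (q : ℕ) [NeZero q] :
    ∑ r ∈ Finset.range q, cexp (2 * Real.pi * I * (r : ℂ) ^ 2 / q)
      = Real.sqrt q * (1 + (-I) ^ q) / (1 - I) := by
  have hq : (q : ℂ) ≠ 0 := NeZero.ne _
  have hq0 : (0 : ℝ) < q := by exact_mod_cast NeZero.pos q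
  let D : ℝ → ℂ := fun δ => δ + (q / 2 : ℝ) * I
  have hDne : ∀ δ, D δ ≠ 0 := fun δ h => by
    have := congrArg im h
    simp [D] at this
    exact hq (by exact_mod_cast this)
  have hDre : ∀ δ, (D δ).re = δ := fun δ => by simp [D]
  have hDcont : Tendsto D (𝓝[>] 0) (𝓝 ((q / 2 : ℝ) * I)) := by
    have : Continuous D := by fun_prop
    have h := this.tendsto 0
    simp only [D, ofReal_zero, zero_add] at h
    exact h.mono_left nhdsWithin_le_nhds
  have hinv : Tendsto (fun δ : ℝ => (4 * δ)⁻¹) (𝓝[>] 0) atTop := by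
    have := (tendsto_inv_nhdsGT_zero (𝕜 := ℝ)).const_mul_atTop (show (0 : ℝ) < 4⁻¹ by norm_num)
    exact this.congr fun δ => by rw [mul_inv]
  have ha₁ : Tendsto (fun δ : ℝ => ((δ : ℂ) * 4)⁻¹.re) (𝓝[>] 0) atTop := by
    refine hinv.congr fun δ => ?_
    rw [show ((δ : ℂ) * 4)⁻¹ = (((4 * δ)⁻¹ : ℝ) : ℂ) by push_cast; ring, ofReal_re]
  have ha₂ : Tendsto (fun δ : ℝ => ((δ : ℂ) * (2 * q * I / D δ))⁻¹.re) (𝓝[>] 0) atTop := by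
    refine hinv.congr' ?_
    filter_upwards [self_mem_nhdsWithin] with δ hδ
    have hδ' : (δ : ℂ) ≠ 0 := by exact_mod_cast (ne_of_gt hδ)
    have : ((δ : ℂ) * (2 * q * I / D δ))⁻¹
        = (((4 * δ)⁻¹ : ℝ) : ℂ) + ((-(2 * (q : ℝ))⁻¹ : ℝ) : ℂ) * I := by
      have := hDne δ
      push_cast
      field_simp
      simp only [D]
      push_cast
      ring_nf
      simp only [I_sq]
      ring
    rw [this, add_re, ofReal_re, re_ofReal_mul, I_re, mul_zero, add_zero]
  have hp₁ : Function.Periodic (fun n : ℤ => cexp (-(Real.pi * I * q / 2) * n ^ 2))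
      ((2 : ℕ) : ℤ) := by
    intro n
    rw [Complex.exp_eq_exp_iff_exists_int]
    refine ⟨-(q * (n + 1)), ?_⟩
    push_cast
    ring
  have hp₂ : Function.Periodic (fun n : ℤ => cexp (2 * Real.pi * I * (n : ℂ) ^ 2 / q))
      (q : ℤ) := by
    intro n
    rw [Complex.exp_eq_exp_iff_exists_int]
    refine ⟨2 * n + q, ?_⟩
    push_cast
    field_simp
    ring
  have h₁ := tendsto_sqrt_mul_tsum_periodic ha₁ 2 hp₁
  have h₂ := tendsto_sqrt_mul_tsum_periodic ha₂ q hp₂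
  have hval₁ : ∑ r ∈ Finset.range 2, cexp (-(Real.pi * I * q / 2) * ((r : ℤ) : ℂ) ^ 2)
      = 1 + (-I) ^ q := by
    rw [Finset.sum_range_succ, Finset.sum_range_one]
    have : cexp (-(Real.pi / 2 * I)) = -I := by rw [Complex.exp_neg, exp_pi_div_two_mul_I, inv_I]
    rw [← this, ← Complex.exp_nat_mul]
    simp
    ring_nf
  rw [hval₁] at h₁
  have hW : Tendsto (fun δ => (2 * q * I / D δ) ^ (1 / 2 : ℂ) * D δ ^ (1 / 2 : ℂ)) (𝓝[>] 0)
      (𝓝 ((4 : ℂ) ^ (1 / 2 : ℂ) * ((q / 2 : ℝ) * I : ℂ) ^ (1 / 2 : ℂ))) := by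
    have hne : ((q / 2 : ℝ) * I : ℂ) ≠ 0 := by simpa [D] using hDne 0
    have hlim : Tendsto (fun δ => 2 * q * I / D δ) (𝓝[>] 0) (𝓝 4) := by
      have := (tendsto_const_nhds (x := (2 * q * I : ℂ))).div hDcont hne
      have h4 : (2 * q * I / ((q / 2 : ℝ) * I) : ℂ) = 4 := by
        rw [div_eq_iff hne]; push_cast; ring
      rwa [h4] at this
    refine (hlim.cpow tendsto_const_nhds (by simp [slitPlane])).mul
      (hDcont.cpow tendsto_const_nhds ?_)
    refine Or.inr ?_
    simpa using hq0.ne'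
  have hfun : ∀ᶠ δ : ℝ in 𝓝[>] 0,
      ((2 * q * I / D δ) ^ (1 / 2 : ℂ) * D δ ^ (1 / 2 : ℂ)) *
        (((δ : ℂ) * 4) ^ (1 / 2 : ℂ) * ∑' n : ℤ, cexp (-(Real.pi * I * q / 2) * n ^ 2) *
          cexp (-Real.pi * ((δ : ℂ) * 4) * (n / (2 : ℕ)) ^ 2))
      = (4 : ℂ) ^ (1 / 2 : ℂ) * (((δ : ℂ) * (2 * q * I / D δ)) ^ (1 / 2 : ℂ) *
          ∑' n : ℤ, cexp (2 * Real.pi * I * (n : ℂ) ^ 2 / q) *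
            cexp (-Real.pi * ((δ : ℂ) * (2 * q * I / D δ)) * (n / q) ^ 2)) := by
    filter_upwards [self_mem_nhdsWithin] with δ hδ
    have hδ0 : (0 : ℝ) < δ := hδ
    have hD := hDne δ
    have hpow : D δ ^ (1 / 2 : ℂ) ≠ 0 := by simp [cpow_eq_zero_iff, hD]
    have hfe := tsum_exp_neg_quadratic (a := D δ) (by rw [hDre]; exact hδ0) 0
    have hl : ∀ n : ℤ, cexp (-(Real.pi * I * q / 2) * n ^ 2) *
          cexp (-Real.pi * ((δ : ℂ) * 4) * (n / (2 : ℕ)) ^ 2)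
        = cexp (-Real.pi * D δ * n ^ 2 + 2 * Real.pi * 0 * n) := by
      intro n
      rw [← Complex.exp_add]
      congr 1
      simp only [D]
      push_cast
      ring
    have hr : ∀ n : ℤ, cexp (2 * Real.pi * I * (n : ℂ) ^ 2 / q) *
            cexp (-Real.pi * ((δ : ℂ) * (2 * q * I / D δ)) * (n / q) ^ 2)
        = cexp (-Real.pi / D δ * (n + I * 0) ^ 2) := by
      intro n
      rw [← Complex.exp_add]
      congr 1
      field_simp
      simp only [D]
      push_cast
      ring_nf
      simp only [I_sq]
      ring
    simp only [hl, hr]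
    rw [hfe, ofReal_mul_cpow hδ0 (by norm_num), ofReal_mul_cpow hδ0
      (div_ne_zero (by simp [hq]) hD)]
    field_simp
  have hlim := tendsto_nhds_unique ((hW.mul h₁).congr' hfun) (h₂.const_mul _)
  have h4 : (4 : ℂ) ^ (1 / 2 : ℂ) ≠ 0 := by simp [cpow_eq_zero_iff]
  rw [mul_assoc] at hlim
  have := mul_left_cancel₀ h4 hlim
  rw [cpow_half_mul_I hq0] at this
  push_cast at this
  rw [← this]
  ring

theorem sum_exp_neg_sq_div (q : ℕ) [NeZero q] :
    ∑ r ∈ Finset.range q, cexp (-(2 * Real.pi * I * (r : ℂ) ^ 2 / q))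
      = Real.sqrt q * (1 + I ^ q) / (1 + I) := by
  have h := congrArg (starRingEnd ℂ) (sum_exp_sq_div q)
  simp only [map_sum, ← exp_conj, map_div₀, map_mul, map_add, map_sub, map_one, map_pow, map_neg,
    conj_I, conj_ofReal, map_natCast, map_ofNat, neg_neg, sub_neg_eq_add] at h
  rw [← h]
  exact Finset.sum_congr rfl fun r _ => by congr 1; ring

theorem sum_range_mul_of_periodic {q : ℕ} {f : ℤ → ℂ} (hf : Function.Periodic f (q : ℤ)) (k : ℕ) :
    ∑ r ∈ Finset.range (k * q), f r = k * ∑ r ∈ Finset.range q, f r := by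
  induction k with
  | zero => simp
  | succ k ih =>
    rw [Nat.succ_mul, Finset.sum_range_add, ih]
    have : ∀ x : ℕ, f ((k * q + x : ℕ) : ℤ) = f x := fun x => by
      have := hf.int_mul k x
      rw [← this]
      push_cast
      ring_nf
    simp only [this]
    push_cast
    ring

theorem sum_zmod_of_periodic {N : ℕ} [NeZero N] {f : ℤ → ℂ} (hf : Function.Periodic f (N : ℤ))
    {L : ZMod N → ℤ} (hL : ∀ u, (L u : ZMod N) = u) (c : ℤ) :
    ∑ u : ZMod N, f (L u + c) = ∑ r ∈ Finset.range N, f r := by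
  have hmod : ∀ z : ℤ, f z = f ((z : ZMod N).val : ℤ) := fun z => by
    rw [ZMod.val_intCast]
    have := hf.int_mul (z / N) (z % N)
    rw [← this]
    congr 1
    rw [Int.cast_id, mul_comm, Int.emod_add_mul_ediv]
  calc ∑ u : ZMod N, f (L u + c) = ∑ u : ZMod N, f ((u + c).val : ℤ) :=
        Finset.sum_congr rfl fun u _ => by rw [hmod]; push_cast; rw [hL]
    _ = ∑ u : ZMod N, f (u.val : ℤ) :=
        Fintype.sum_equiv (Equiv.addRight (c : ZMod N)) _ _ fun _ => rfl
    _ = _ := Finset.sum_nbij' (fun u => u.val) (fun n => (n : ZMod N))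
        (fun u _ => by simpa using ZMod.val_lt u) (fun _ _ => Finset.mem_univ _)
        (fun u _ => ZMod.natCast_zmod_val u)
        (fun n hn => ZMod.val_cast_of_lt (Finset.mem_range.mp hn)) (fun _ _ => rfl)

theorem intCast_lift' (H H' : ℕ) [NeZero H] [NeZero H'] (u : ZMod (H * H' ^ 2)) :
    (lift' H H' u : ZMod (H * H' ^ 2)) = u := by
  have h0 : (H : ZMod (H * H' ^ 2)) * (H' : ZMod (H * H' ^ 2)) ^ 2 = 0 := by
    exact_mod_cast ZMod.natCast_self (H * H' ^ 2)
  unfold lift'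
  split_ifs <;> simp [h0]

/-- The constant `C_{im}` in one variable. -/
noncomputable def gaussConst (N : ℕ) (m : ℤ) : ℂ :=
  if 0 < m then (Real.sqrt ((m : ℝ) / 2) : ℂ) * (1 + I ^ (2 * (N : ℤ) / m)) / (1 + I)
  else (Real.sqrt ((-m : ℝ) / 2) : ℂ) * (1 + (-I) ^ (2 * (N : ℤ) / (-m))) / (1 - I)

theorem sqrt_mul_sqrt_half {N μ q : ℕ} (h : μ * q = 2 * N) :
    (Real.sqrt N : ℂ) * Real.sqrt ((μ : ℝ) / 2) = μ / 2 * Real.sqrt q := by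
  have h' : (μ : ℝ) * q = 2 * N := by exact_mod_cast h
  have : Real.sqrt N * Real.sqrt ((μ : ℝ) / 2) = μ / 2 * Real.sqrt q := by
    rw [← Real.sqrt_mul (by positivity), show (N : ℝ) * (μ / 2) = (μ / 2) ^ 2 * q by
      linear_combination (-(μ : ℝ) / 4) * h', Real.sqrt_mul (by positivity),
      Real.sqrt_sq (by positivity)]
  have h2 := congrArg ((↑) : ℝ → ℂ) this
  push_cast at h2
  exact h2

theorem periodic_exp_sq {N : ℕ} [NeZero N] (hN : Even N) (m : ℤ) :
    Function.Periodic (fun z : ℤ => cexp (-(Real.pi * I * m * (z : ℂ) ^ 2 / N))) (N : ℤ) := by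
  intro z
  obtain ⟨t, ht⟩ := hN
  have hN0 : (N : ℂ) ≠ 0 := NeZero.ne _
  have ht' : (N : ℂ) = 2 * t := by rw [ht]; push_cast; ring
  rw [Complex.exp_eq_exp_iff_exists_int]
  refine ⟨-(m * (z + t)), ?_⟩
  push_cast
  field_simp
  rw [ht']
  ring

/-- The quadratic Gauss sum with exponent `-π i m z² / N`, where `m ∣ 2N`. -/
theorem sum_range_exp_sq {N : ℕ} [NeZero N] (hN : Even N) {m : ℤ} (hm : m ≠ 0)
    (hdvd : m ∣ 2 * (N : ℤ)) :
    ∑ r ∈ Finset.range N, cexp (-(Real.pi * I * m * (((r : ℤ) : ℂ)) ^ 2 / N))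
      = Real.sqrt N * gaussConst N m := by
  obtain ⟨q, hq⟩ : m.natAbs ∣ 2 * N := by
    have := Int.natAbs_dvd_natAbs.mpr hdvd
    rwa [show (2 * (N : ℤ)).natAbs = 2 * N by omega] at this
  obtain ⟨μ, hμ⟩ : ∃ μ, m.natAbs = μ := ⟨_, rfl⟩
  rw [hμ] at hq
  have hN0 : N ≠ 0 := NeZero.ne _
  have hμ0 : μ ≠ 0 := by omega
  have hq0 : q ≠ 0 := by rintro rfl; omega
  have : NeZero q := ⟨hq0⟩
  have hqC : (q : ℂ) ≠ 0 := by exact_mod_cast hq0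
  have hNC : (N : ℂ) ≠ 0 := by exact_mod_cast hN0
  have hC : (2 * N : ℂ) = μ * q := by exact_mod_cast hq
  have hZ : 2 * (N : ℤ) = μ * q := by exact_mod_cast hq
  have hdiv : 2 * (N : ℤ) / μ = q := by
    rw [hZ]; exact Int.mul_ediv_cancel_left _ (by exact_mod_cast hμ0)
  have hsum (s : ℤ) (hs : m = s * μ) :
      2 * ∑ r ∈ Finset.range N, cexp (-(Real.pi * I * m * (((r : ℤ) : ℂ)) ^ 2 / N))
        = μ * ∑ r ∈ Finset.range q, cexp (-(2 * Real.pi * I * s * (((r : ℤ) : ℂ)) ^ 2 / q)) := by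
    have hfun : (fun z : ℤ => cexp (-(Real.pi * I * m * (z : ℂ) ^ 2 / N)))
        = fun z : ℤ => cexp (-(2 * Real.pi * I * s * (z : ℂ) ^ 2 / q)) := by
      ext z
      congr 2
      rw [div_eq_div_iff hNC hqC, hs]
      push_cast
      linear_combination (-Real.pi * I * s * (z : ℂ) ^ 2) * hC
    have hper : Function.Periodic (fun z : ℤ => cexp (-(2 * Real.pi * I * s * (z : ℂ) ^ 2 / q)))
        (q : ℤ) := by
      intro z
      rw [Complex.exp_eq_exp_iff_exists_int]
      refine ⟨-(s * (2 * z + q)), ?_⟩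
      push_cast
      field_simp
      ring
    have h1 := sum_range_mul_of_periodic (periodic_exp_sq hN m) 2
    have h2 := sum_range_mul_of_periodic hper μ
    rw [← hq] at h2
    simp only [← congrFun hfun] at h2 ⊢
    rw [← h2, h1, Nat.cast_ofNat]
  unfold gaussConst
  have hsq := sqrt_mul_sqrt_half hq.symm
  rcases lt_or_gt_of_ne hm with h | h
  · have hmμ : m = -1 * (μ : ℤ) := by omega
    have hs := hsum (-1) hmμ
    have hG := sum_exp_sq_div q
    have hneg : -m = (μ : ℤ) := by omega
    have hneg' : -(m : ℝ) = μ := by exact_mod_cast hneg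
    rw [if_neg (by omega), hneg, hneg', hdiv, zpow_natCast, ← mul_left_inj' (two_ne_zero' ℂ),
      mul_comm, hs]
    have : ∀ r : ℕ, cexp (-(2 * Real.pi * I * ((-1 : ℤ) : ℂ) * (((r : ℤ) : ℂ)) ^ 2 / q))
        = cexp (2 * Real.pi * I * (r : ℂ) ^ 2 / q) := fun r => by
      congr 1; push_cast; ring
    simp only [this]
    rw [hG]
    linear_combination (-2 * (1 + (-I) ^ q) / (1 - I)) * hsq
  · have hmμ : m = 1 * (μ : ℤ) := by omega
    have hs := hsum 1 hmμ
    have hG := sum_exp_neg_sq_div q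
    have hpos : m = (μ : ℤ) := by omega
    have hpos' : (m : ℝ) = μ := by exact_mod_cast hpos
    rw [if_pos h, hpos', ← mul_left_inj' (two_ne_zero' ℂ), mul_comm, hs, hpos, hdiv, zpow_natCast]
    have : ∀ r : ℕ, cexp (-(2 * Real.pi * I * ((1 : ℤ) : ℂ) * (((r : ℤ) : ℂ)) ^ 2 / q))
        = cexp (-(2 * Real.pi * I * (r : ℂ) ^ 2 / q)) := fun r => by
      congr 1; push_cast; ring
    simp only [this]
    rw [hG]
    linear_combination (-2 * (1 + I ^ q) / (1 + I)) * hsq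

/-- The Fourier transform of `exp (-π i m z² / N)` in one variable. -/
theorem sum_val'_exp (H H' : ℕ) [NeZero H] [NeZero H'] (hH : Even H) {m : ℤ} (hm : m ≠ 0)
    (hdvd : m ∣ 2 * (H : ℤ) * (H' : ℤ) ^ 2) {v : ZMod (H * H' ^ 2)} (hv : m ∣ lift' H H' v) :
    ∑ u : ZMod (H * H' ^ 2),
        cexp (-(2 * Real.pi * I * (H : ℂ)⁻¹ * (val' H H' u * val' H H' v))) *
          cexp (-(Real.pi * I * m * (H : ℂ)⁻¹ * val' H H' u ^ 2))
      = Real.sqrt ((H * H' ^ 2 : ℕ) : ℝ) * gaussConst (H * H' ^ 2) m *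
          cexp (Real.pi * I * (H : ℂ)⁻¹ / m * val' H H' v ^ 2) := by
  obtain ⟨c, hc⟩ := hv
  have hHC : (H : ℂ) ≠ 0 := NeZero.ne _
  have hHC' : (H' : ℂ) ≠ 0 := NeZero.ne _
  have hmC : (m : ℂ) ≠ 0 := by exact_mod_cast hm
  have hN : Even (H * H' ^ 2) := hH.mul_right _
  rw [← sum_range_exp_sq hN hm (by push_cast; rwa [← mul_assoc]),
    ← sum_zmod_of_periodic (periodic_exp_sq hN m) (intCast_lift' H H') c, Finset.sum_mul]
  refine Finset.sum_congr rfl fun u _ => ?_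
  rw [← Complex.exp_add, ← Complex.exp_add]
  congr 1
  simp only [val', hc]
  push_cast
  field_simp
  ring

/-- The infinitesimal Fourier transformation of the functional
`g_{im}(a) = exp(−iπm·ε·∑_k a(k)²)` for a nonzero integer `m` with `m ∣ 2HH′²`,
at `b ∈ X` with `m ∣ b(k)/ε′` for all `k`:
`(Fg_{im})(b) = C_{im}·exp(iπ·(ε/m)·∑_k b(k)²)`, with `C_{im}` a Gauss-sum constant. -/
theorem fourier_imaginary_gaussian_functional (H H' : ℕ) [NeZero H] [NeZero H']
    (hH : Even H) (hH' : Even H') (K : Type) [Fintype K] [DecidableEq K]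
    (hK : Fintype.card K = H ^ 2) (m : ℤ) (hm : m ≠ 0)
    (hdvd : m ∣ 2 * (H : ℤ) * (H' : ℤ) ^ 2)
    (b : K → ZMod (H * H' ^ 2)) (hb : ∀ k, m ∣ lift' H H' (b k)) :
    ∑ a : K → ZMod (H * H' ^ 2), eps0 H H' K *
        Complex.exp (-(2 * Real.pi * Complex.I * (H : ℂ)⁻¹ *
          ∑ k, val' H H' (a k) * val' H H' (b k))) *
        Complex.exp (-(Real.pi * Complex.I * (m : ℂ) * (H : ℂ)⁻¹ *
          ∑ k, val' H H' (a k) ^ 2))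
      = (if 0 < m then
            ((Real.sqrt ((m : ℝ) / 2) : ℂ) *
                (1 + Complex.I ^ (2 * (H : ℤ) * (H' : ℤ) ^ 2 / m)) / (1 + Complex.I)) ^ (H ^ 2)
          else
            ((Real.sqrt ((-m : ℝ) / 2) : ℂ) *
                (1 + (-Complex.I) ^ (2 * (H : ℤ) * (H' : ℤ) ^ 2 / (-m))) / (1 - Complex.I)) ^ (H ^ 2))
        * Complex.exp (Real.pi * Complex.I * (H : ℂ)⁻¹ / (m : ℂ) *
            ∑ k, val' H H' (b k) ^ 2) := by
  have hc : ∀ a : K → ZMod (H * H' ^ 2), eps0 H H' K *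
        Complex.exp (-(2 * Real.pi * Complex.I * (H : ℂ)⁻¹ *
          ∑ k, val' H H' (a k) * val' H H' (b k))) *
        Complex.exp (-(Real.pi * Complex.I * (m : ℂ) * (H : ℂ)⁻¹ *
          ∑ k, val' H H' (a k) ^ 2))
      = eps0 H H' K * ∏ k,
          (cexp (-(2 * Real.pi * I * (H : ℂ)⁻¹ * (val' H H' (a k) * val' H H' (b k)))) *
            cexp (-(Real.pi * I * m * (H : ℂ)⁻¹ * val' H H' (a k) ^ 2))) := fun a => by
    rw [mul_assoc, Finset.prod_mul_distrib]
    congr 2 <;> rw [← Complex.exp_sum, Finset.sum_neg_distrib, ← Finset.mul_sum]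
  simp only [hc]
  have hN0 : ((Real.sqrt ((H * H' ^ 2 : ℕ) : ℝ) : ℝ) : ℂ) ≠ 0 := by
    have : (0 : ℝ) < ((H * H' ^ 2 : ℕ) : ℝ) := by exact_mod_cast NeZero.pos (H * H' ^ 2)
    exact_mod_cast (Real.sqrt_pos.mpr this).ne'
  have heps : eps0 H H' K = ((Real.sqrt ((H * H' ^ 2 : ℕ) : ℝ) : ℂ) ^ (H ^ 2))⁻¹ := by
    unfold eps0
    rw [Fintype.card_fun, ZMod.card, hK, Nat.cast_pow, ← ofReal_pow]
    congr 2
    rw [Real.sqrt_eq_iff_mul_self_eq (by positivity) (by positivity), ← mul_pow,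
      Real.mul_self_sqrt (by positivity)]
  have hconst : (if 0 < m then
            ((Real.sqrt ((m : ℝ) / 2) : ℂ) *
                (1 + Complex.I ^ (2 * (H : ℤ) * (H' : ℤ) ^ 2 / m)) / (1 + Complex.I)) ^ (H ^ 2)
          else
            ((Real.sqrt ((-m : ℝ) / 2) : ℂ) *
                (1 + (-Complex.I) ^ (2 * (H : ℤ) * (H' : ℤ) ^ 2 / (-m))) / (1 - Complex.I)) ^ (H ^ 2))
      = gaussConst (H * H' ^ 2) m ^ (H ^ 2) := by
    unfold gaussConst
    push_cast
    rw [← mul_assoc]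
    split_ifs <;> rfl
  rw [← Finset.mul_sum, ← Fintype.prod_sum fun (k : K) (u : ZMod (H * H' ^ 2)) =>
      cexp (-(2 * Real.pi * I * (H : ℂ)⁻¹ * (val' H H' u * val' H H' (b k)))) *
        cexp (-(Real.pi * I * m * (H : ℂ)⁻¹ * val' H H' u ^ 2)),
    Finset.prod_congr rfl fun k _ => sum_val'_exp H H' hH hm hdvd (hb k),
    Finset.prod_mul_distrib, ← Complex.exp_sum, Finset.prod_const, Finset.card_univ, hK,
    ← Finset.mul_sum, heps, hconst, mul_pow]
  field_simp
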